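/- Let x, x̃ ∈ ℝ^d be unit vectors, let κ(x, x̃) = (xᵀx̃)·(π − arccos(xᵀx̃))/(2π) be the ReLU neural tangent kernel, let m ≥ 1 be an integer and ν > 0. Under the m-fold product of the standard Gaussian measure γ_d (i.e. w_1, …, w_m i.i.d. N(0, I_d)), with probability at least 1 − 2·e^{−ν} the random-feature kernel estimate satisfies |(1/m)·Σ_{k=1}^m 𝟙{w_kᵀx > 0}·𝟙{w_kᵀx̃ > 0}·(xᵀx̃) − κ(x, x̃)| ≤ √(ν/(2m)). -/

import Mathlib

open MeasureTheory ProbabilityTheory Real Finset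

lemma aux_char_pi {ι : Type*} [Fintype ι] (c : ι → ℝ) :
    ∫ w : ι → ℝ, Complex.exp (((∑ i, w i * c i : ℝ) : ℂ) * Complex.I)
      ∂(Measure.pi fun _ : ι => gaussianReal 0 1)
      = Complex.exp (((-(∑ i, c i ^ 2) / 2 : ℝ) : ℂ)) := by
  have h := charFun_pi (μ := fun _ : ι => gaussianReal 0 1) (WithLp.toLp 2 c)
  rw [charFun_apply, ← MeasurableEquiv.coe_toLp, integral_map_equiv] at h
  simp only [charFun_gaussianReal, ← Complex.exp_sum] at h
  convert h using 1
  · congr 1; ext w; congr 3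
    simp [PiLp.inner_apply, mul_comm]
  · congr 1
    simp [Finset.sum_div, neg_div]

lemma aux_char_prod (a b : ℝ) :
    ∫ p : ℝ × ℝ, Complex.exp (((p.1 * a + p.2 * b : ℝ) : ℂ) * Complex.I)
      ∂((gaussianReal 0 1).prod (gaussianReal 0 1))
      = Complex.exp (((-(a ^ 2 + b ^ 2) / 2 : ℝ) : ℂ)) := by
  have h := charFun_prod (μ := gaussianReal 0 1) (ν := gaussianReal 0 1) (WithLp.toLp 2 (a, b))
  rw [charFun_apply, ← MeasurableEquiv.coe_toLp, integral_map_equiv] at h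
  simp only [charFun_gaussianReal, ← Complex.exp_add] at h
  convert h using 1
  · congr 1; ext w; congr 3
    simp [mul_comm]
  · congr 1
    simp; ring

lemma aux_law {ι : Type*} [Fintype ι] (x y : ι → ℝ) (r s : ℝ) (hx : ∑ i, x i ^ 2 = 1)
    (hy : ∑ i, y i ^ 2 = 1) (hr : ∑ i, x i * y i = r) (hrs : r ^ 2 + s ^ 2 = 1) :
    (Measure.pi fun _ : ι => gaussianReal 0 1).map
      (fun w => ((∑ i, w i * x i, ∑ i, w i * y i) : ℝ × ℝ))
    = ((gaussianReal 0 1).prod (gaussianReal 0 1)).map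
      (fun p => ((p.1, r * p.1 + s * p.2) : ℝ × ℝ)) := by
  have : IsProbabilityMeasure ((Measure.pi fun _ : ι => gaussianReal 0 1).map
      (fun w => ((∑ i, w i * x i, ∑ i, w i * y i) : ℝ × ℝ))) :=
    Measure.isProbabilityMeasure_map (by fun_prop)
  have : IsProbabilityMeasure (((gaussianReal 0 1).prod (gaussianReal 0 1)).map
      (fun p => ((p.1, r * p.1 + s * p.2) : ℝ × ℝ))) :=
    Measure.isProbabilityMeasure_map (by fun_prop)
  apply Measure.ext_of_charFunDual
  ext L
  have hL : ∀ p : ℝ × ℝ, L p = p.1 * L (1, 0) + p.2 * L (0, 1) := by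
    intro p
    have : p = p.1 • ((1, 0) : ℝ × ℝ) + p.2 • ((0, 1) : ℝ × ℝ) := by ext <;> simp
    conv_lhs => rw [this]
    rw [map_add, map_smul, map_smul]; rfl
  set a := L (1, 0)
  set b := L (0, 1)
  rw [charFunDual_apply, charFunDual_apply, integral_map (by fun_prop) (by fun_prop),
    integral_map (by fun_prop) (by fun_prop)]
  have h1 := aux_char_pi (fun i => a * x i + b * y i)
  have h2 := aux_char_prod (a + b * r) (b * s)
  have e : ∑ i, (a * x i + b * y i) ^ 2 = (a + b * r) ^ 2 + (b * s) ^ 2 := by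
    have : ∑ i, (a * x i + b * y i) ^ 2
        = a ^ 2 * ∑ i, x i ^ 2 + 2 * a * b * ∑ i, x i * y i + b ^ 2 * ∑ i, y i ^ 2 := by
      simp only [Finset.mul_sum, ← Finset.sum_add_distrib]
      exact Finset.sum_congr rfl fun i _ => by ring
    rw [this, hx, hy, hr]; linear_combination (-b ^ 2) * hrs
  rw [e, ← h2] at h1
  convert h1 using 1
  · congr 1; ext w; congr 3
    rw [hL]; simp only [Finset.sum_mul, ← Finset.sum_add_distrib]
    exact Finset.sum_congr rfl fun i _ => by ring
  · congr 1; ext w; congr 3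
    rw [hL]; ring

lemma aux_polar (A : Set (ℝ × ℝ)) (hA : MeasurableSet A) (S : Set ℝ) (hS : MeasurableSet S)
    (hAS : ∀ r > 0, ∀ t ∈ Set.Ioo (-π) π, ((r * cos t, r * sin t) ∈ A ↔ t ∈ S)) :
    ((gaussianReal 0 1).prod (gaussianReal 0 1)) A
      = (∫⁻ r in Set.Ioi (0:ℝ), ENNReal.ofReal (r * ((2 * π)⁻¹ * exp (-r ^ 2 / 2))))
        * volume (S ∩ Set.Ioo (-π) π) := by
  rw [gaussianReal_of_var_ne_zero 0 one_ne_zero, prod_withDensity (measurable_gaussianPDF _ _)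
    (measurable_gaussianPDF _ _), withDensity_apply _ hA, ← lintegral_indicator hA]
  change ∫⁻ p : ℝ × ℝ, _ ∂(volume : Measure (ℝ × ℝ)) = _
  rw [← lintegral_comp_polarCoord_symm]
  have : ∀ p ∈ polarCoord.target, ENNReal.ofReal p.1 •
      A.indicator (fun z : ℝ × ℝ => gaussianPDF 0 1 z.1 * gaussianPDF 0 1 z.2) (polarCoord.symm p)
      = ENNReal.ofReal (p.1 * ((2 * π)⁻¹ * exp (-p.1 ^ 2 / 2))) * S.indicator 1 p.2 := by
    rintro ⟨r, t⟩ ⟨h1, h2⟩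
    simp only [Set.mem_Ioi] at h1 h2
    have hm := hAS r h1 t h2
    by_cases ht : t ∈ S
    · simp only [polarCoord_symm_apply, Set.indicator_of_mem (hm.2 ht), Set.indicator_of_mem ht]
      simp only [gaussianPDF, gaussianPDFReal, Pi.one_apply, mul_one, smul_eq_mul]
      rw [← ENNReal.ofReal_mul (by positivity), ← ENNReal.ofReal_mul h1.le]
      congr 2
      have : (√(2 * π))⁻¹ * (√(2 * π))⁻¹ = (2 * π)⁻¹ := by
        rw [← mul_inv, Real.mul_self_sqrt (by positivity)]
      simp only [NNReal.coe_one, mul_one, sub_zero]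
      rw [mul_mul_mul_comm, this, ← Real.exp_add]
      congr 2
      have := Real.sin_sq_add_cos_sq t
      linear_combination (-r^2/2) * this
    · simp only [polarCoord_symm_apply, Set.indicator_of_notMem (fun h => ht (hm.1 h)),
        Set.indicator_of_notMem ht]
      simp
  rw [setLIntegral_congr_fun polarCoord.open_target.measurableSet this]
  change ∫⁻ p in Set.Ioi 0 ×ˢ Set.Ioo (-π) π, _ ∂((volume : Measure ℝ).prod volume) = _
  rw [← Measure.prod_restrict, lintegral_prod_mul
    (f := fun r : ℝ => ENNReal.ofReal (r * ((2 * π)⁻¹ * exp (-r ^ 2 / 2))))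
    (g := S.indicator 1) (by fun_prop)
    ((measurable_one.indicator hS).aemeasurable), lintegral_indicator_one hS,
    Measure.restrict_apply hS]

lemma aux_const : (∫⁻ r in Set.Ioi (0:ℝ), ENNReal.ofReal (r * ((2 * π)⁻¹ * exp (-r ^ 2 / 2))))
    = ENNReal.ofReal (2 * π)⁻¹ := by
  have h := aux_polar Set.univ .univ Set.univ .univ (by simp)
  rw [measure_univ, Set.univ_inter, Real.volume_Ioo, sub_neg_eq_add, ← two_mul] at h
  have h0 : (0:ℝ) < 2 * π := by positivity
  rw [ENNReal.ofReal_inv_of_pos h0]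
  exact ENNReal.eq_inv_of_mul_eq_one_left h.symm

lemma aux_orthant (r : ℝ) (h1 : -1 ≤ r) (h2 : r ≤ 1) :
    ((gaussianReal 0 1).prod (gaussianReal 0 1))
      {p : ℝ × ℝ | 0 < p.1 ∧ 0 < r * p.1 + √(1 - r ^ 2) * p.2}
      = ENNReal.ofReal ((π - arccos r) / (2 * π)) := by
  have hp := Real.pi_pos
  have t0 := Real.arccos_nonneg r
  have t1 := Real.arccos_le_pi r
  rw [aux_polar _ (by measurability) (Set.Ioo (arccos r - π / 2) (π / 2)) measurableSet_Ioo,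
    aux_const]
  · rw [Set.inter_eq_left.2 (Set.Ioo_subset_Ioo (by linarith) (by linarith)), Real.volume_Ioo,
      ← ENNReal.ofReal_mul (by positivity)]
    congr 1; field_simp; ring
  · intro q hq t ⟨ht1, ht2⟩
    have e : r * (q * cos t) + √(1 - r ^ 2) * (q * sin t) = q * cos (t - arccos r) := by
      rw [Real.cos_sub, Real.cos_arccos h1 h2, Real.sin_arccos]; ring
    simp only [Set.mem_ofPred_eq, e, Set.mem_Ioo, mul_pos_iff_of_pos_left hq]
    constructor
    · rintro ⟨a, b⟩
      have u1 : t < π / 2 := by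
        by_contra! h
        exact absurd (Real.cos_nonpos_of_pi_div_two_le_of_le h (by linarith)) (not_le.2 a)
      have u2 : -(π / 2) < t := by
        by_contra! h
        have := Real.cos_nonpos_of_pi_div_two_le_of_le (x := -t) (by linarith) (by linarith)
        rw [Real.cos_neg] at this; linarith
      refine ⟨?_, u1⟩
      by_contra! h
      have := Real.cos_nonpos_of_pi_div_two_le_of_le (x := -(t - arccos r)) (by linarith)
        (by linarith)
      rw [Real.cos_neg] at this; linarith
    · rintro ⟨a, b⟩
      exact ⟨Real.cos_pos_of_mem_Ioo ⟨by linarith, b⟩,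
        Real.cos_pos_of_mem_Ioo ⟨by linarith, by linarith⟩⟩

theorem random_feature_kernel_concentration
    (d m : ℕ) (hm : 1 ≤ m) (ν : ℝ) (hν : 0 < ν)
    (x xt : Fin d → ℝ)
    (hx : ∑ i, (x i) ^ 2 = 1) (hxt : ∑ i, (xt i) ^ 2 = 1) :
    (Measure.pi fun _ : Fin m => Measure.pi fun _ : Fin d => gaussianReal 0 1)
        {W : Fin m → Fin d → ℝ |
          |(1 / (m : ℝ)) * ∑ k, (if 0 < ∑ i, W k i * x i then (1:ℝ) else 0)
              * (if 0 < ∑ i, W k i * xt i then (1:ℝ) else 0) * (∑ i, x i * xt i)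
            - (∑ i, x i * xt i) * ((π - Real.arccos (∑ i, x i * xt i)) / (2 * π))|
          ≤ Real.sqrt (ν / (2 * m))}
      ≥ ENNReal.ofReal (1 - 2 * Real.exp (-ν)) := by
  set r := ∑ i, x i * xt i with hr
  have hr2 : r ^ 2 ≤ 1 := by
    have := Finset.sum_mul_sq_le_sq_mul_sq Finset.univ x xt
    rwa [hx, hxt, one_mul] at this
  obtain ⟨hr1, hr1'⟩ := abs_le_one_iff_mul_self_le_one.2 (by nlinarith : r * r ≤ 1) |> abs_le.1
  set κ := r * ((π - Real.arccos r) / (2 * π)) with hκ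
  set γ : Measure (Fin d → ℝ) := Measure.pi fun _ : Fin d => gaussianReal 0 1 with hγ
  set μ := Measure.pi fun _ : Fin m => γ with hμ
  set f : (Fin d → ℝ) → ℝ := fun w => (if 0 < ∑ i, w i * x i then (1:ℝ) else 0)
              * (if 0 < ∑ i, w i * xt i then (1:ℝ) else 0) * r with hf
  set A : Set (Fin d → ℝ) := {w | 0 < ∑ i, w i * x i ∧ 0 < ∑ i, w i * xt i} with hA
  have hAm : MeasurableSet A :=
    MeasurableSet.inter (s₁ := {w : Fin d → ℝ | 0 < ∑ i, w i * x i})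
      (s₂ := {w : Fin d → ℝ | 0 < ∑ i, w i * xt i})
      (measurableSet_lt (by fun_prop) (by fun_prop))
      (measurableSet_lt (by fun_prop) (by fun_prop))
  have hfA : f = A.indicator (fun _ => r) := by
    ext w
    by_cases h1 : 0 < ∑ i, w i * x i <;> by_cases h2 : 0 < ∑ i, w i * xt i <;>
      simp [hf, hA, h1, h2]
  have hfm : Measurable f := hfA ▸ measurable_const.indicator hAm
  have hγA : γ A = ENNReal.ofReal ((π - arccos r) / (2 * π)) := by
    rw [← aux_orthant r hr1 hr1']
    have hl := aux_law x xt r (√(1 - r ^ 2)) hx hxt hr.symm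
      (by rw [Real.sq_sqrt (by linarith)]; ring)
    have hB : MeasurableSet {p : ℝ × ℝ | 0 < p.1 ∧ 0 < p.2} :=
      MeasurableSet.inter (s₁ := {p : ℝ × ℝ | 0 < p.1}) (s₂ := {p : ℝ × ℝ | 0 < p.2})
        (measurableSet_lt (by fun_prop) (by fun_prop))
        (measurableSet_lt (by fun_prop) (by fun_prop))
    have := congrArg (fun M => M {p : ℝ × ℝ | 0 < p.1 ∧ 0 < p.2}) hl
    rw [Measure.map_apply (by fun_prop) hB, Measure.map_apply (by fun_prop) hB] at this
    exact this
  have hfi : ∫ w, f w ∂γ = κ := by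
    rw [hfA, integral_indicator_const _ hAm, Measure.real, hγA, ENNReal.toReal_ofReal, smul_eq_mul,
      mul_comm]
    exact div_nonneg (by linarith [Real.arccos_le_pi r]) (by positivity)
  have hm0 : (0:ℝ) < m := by exact_mod_cast hm
  have hfk : ∀ k : Fin m, Measurable fun W : Fin m → Fin d → ℝ => f (W k) :=
    fun k => hfm.comp (measurable_pi_apply k)
  have hsub : ∀ k : Fin m, HasSubgaussianMGF (fun W : Fin m → Fin d → ℝ => f (W k) - κ)
      ((1 / 2) ^ 2) μ := by
    intro k
    have hev : MeasurePreserving (Function.eval k) μ γ :=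
      measurePreserving_eval (fun _ : Fin m => γ) k
    have hmean : ∫ W, f (W k) ∂μ = κ := by
      rw [← hfi, ← hev.map_eq, integral_map (measurable_pi_apply k).aemeasurable hfm.aestronglyMeasurable]
    have h := hasSubgaussianMGF_of_mem_Icc (μ := μ) (X := fun W => f (W k)) (a := min r 0)
      (b := min r 0 + 1) (hfk k).aemeasurable (ae_of_all _ fun W => by
        rw [hfA]
        by_cases h : W k ∈ A
        · rw [Set.indicator_of_mem h]
          refine ⟨min_le_left _ _, ?_⟩
          rcases min_cases r 0 with h | h <;> linarith
        · rw [Set.indicator_of_notMem h]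
          refine ⟨min_le_right _ _, ?_⟩
          rcases min_cases r 0 with h | h <;> linarith)
    rw [hmean] at h
    simpa using h
  have hind : iIndepFun (fun (k : Fin m) (W : Fin m → Fin d → ℝ) => f (W k) - κ) μ :=
    iIndepFun_pi (X := fun _ w => f w - κ) (fun _ => (hfm.sub_const κ).aemeasurable)
  have hS := HasSubgaussianMGF.sum_of_iIndepFun hind (s := Finset.univ)
    (c := fun _ => (1/2)^2) (fun k _ => hsub k)
  set ε := √(ν / (2 * m)) with hε
  have hε2 : ε ^ 2 = ν / (2 * m) := Real.sq_sqrt (by positivity)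
  have hm1 : 0 ≤ m * ε := by positivity
  have hexp : -(m * ε) ^ 2 / (2 * ((∑ _k : Fin m, ((1:NNReal)/2)^2 : NNReal) : ℝ)) = -ν := by
    rw [mul_pow, hε2]; simp; field_simp
  have hU := hS.measure_ge_le hm1
  have hD := hS.neg.measure_ge_le hm1
  rw [hexp] at hU hD
  set G : Set (Fin m → Fin d → ℝ) := {W | |(1 / (m : ℝ)) * ∑ k, f (W k) - κ| ≤ ε} with hG
  change μ G ≥ _
  have hGm : MeasurableSet G := measurableSet_le
    (((Finset.measurable_fun_sum _ fun k _ => hfk k).const_mul _).sub_const κ).abs measurable_const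
  have hGc : μ.real Gᶜ ≤ 2 * exp (-ν) := by
    rw [two_mul]
    refine le_trans (measureReal_mono ?_) ((measureReal_union_le _ _).trans (add_le_add hU hD))
    intro W hW
    have hW : ε < |(1 / (m : ℝ)) * ∑ k, f (W k) - κ| := not_le.1 hW
    have e : (1 / (m : ℝ)) * ∑ k, f (W k) - κ = (1 / m) * ∑ k, (f (W k) - κ) := by
      rw [Finset.sum_sub_distrib]; simp; field_simp
    rw [e, abs_mul, abs_of_pos (by positivity), one_div, ← div_eq_inv_mul, lt_div_iff₀ hm0,
      mul_comm, lt_abs] at hW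
    exact hW.imp le_of_lt le_of_lt
  have : 1 - 2 * exp (-ν) ≤ μ.real G := by
    have := probReal_add_probReal_compl (μ := μ) hGm
    linarith
  rw [ge_iff_le, ← ofReal_measureReal]
  exact ENNReal.ofReal_le_ofReal this
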